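/- arXiv:2203.13942 — 2 statements merged into one kernel-verified Lean document; each statement's English description precedes it below -/
import Mathlib

section
/- Let f : ℝ → ℝ and let p₊ and p₋ be real polynomials. Define g(x) = f(x) − H(x)p₊(x) − H(−x)p₋(x), where H is the Heaviside step function, and suppose g is of bounded variation on ℝ (finite total variation over ℝ) with lim_{|x|→∞} g(x) = 0. Then the improper integral ĝ(s) = lim_{X→−∞, Y→∞} ∫_X^Y e^{-ist} g(t) dt exists for each s ≠ 0, and for each x ∈ ℝ, (f(x−)+f(x+))/2 = (1/(2π)) · lim_{T→∞, S→0⁺} ∫_{S<|s|<T} e^{ixs} ĝ(s) ds + H(x)p₊(x) + H(−x)p₋(x), where the double limit means: for every ε > 0 there exist M > 0 and η > 0 such that the stated quantity is within ε whenever T > M and 0 < S < η. -/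
/-- The Heaviside step function: `1` for positive argument, `1/2` at `0`, `0` otherwise. -/
noncomputable def heaviside (x : ℝ) : ℝ :=
  if 0 < x then 1 else if x = 0 then 1/2 else 0

/-!
A function `g` of bounded variation vanishing at `±∞` has a Stieltjes measure `σ`, a signed measure
of total mass zero, and `g t = σ (Iio t)` for almost every `t`. Integrating by parts on `[X, Y]`
leaves a boundary term proportional to the total mass of `σ`, so `ĝ(s) = σ̂(s) / (i s)`.
Fubini's theorem turns the truncated inversion integral of `σ̂(s) / (i s)` at `x` into
`2 ∫ (Si (T (x - y)) - Si (S (x - y))) dσ(y)`, where `Si` is the sine integral. As `Si` is bounded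
and tends to `±π/2` at `±∞`, dominated convergence gives the limit
`π (σ (Iio x) - σ (Ioi x)) = π (g(x-) + g(x+))`.
-/

open MeasureTheory Filter Set Topology
open Complex (I)

section SineIntegral

/-- The sine integral `Si`. Using `Real.sinc` gives the integrand `sin s / s` its limit `1` at
`0`. -/
noncomputable def sineIntegral (T : ℝ) : ℝ :=
  ∫ s in (0 : ℝ)..T, Real.sinc s

lemma continuous_sineIntegral : Continuous sineIntegral :=
  intervalIntegral.continuous_primitive
    (fun _ _ => Real.continuous_sinc.intervalIntegrable _ _) 0

@[simp]
lemma sineIntegral_zero : sineIntegral 0 = 0 :=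
  intervalIntegral.integral_same

lemma sineIntegral_neg (T : ℝ) : sineIntegral (-T) = -sineIntegral T := by
  have h := intervalIntegral.integral_comp_neg (a := 0) (b := T) Real.sinc
  simp only [Real.sinc_neg, neg_zero] at h
  rw [sineIntegral, sineIntegral, h, intervalIntegral.integral_symm]

lemma integral_sin_mul_div {S T : ℝ} (hS : 0 < S) (hT : 0 < T) (y : ℝ) :
    ∫ s in S..T, Real.sin (s * y) / s = sineIntegral (T * y) - sineIntegral (S * y) := by
  have hint : ∀ a b, IntervalIntegrable Real.sinc volume a b :=
    fun _ _ => Real.continuous_sinc.intervalIntegrable _ _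
  rw [sineIntegral, sineIntegral, intervalIntegral.integral_interval_sub_left (hint _ _) (hint _ _),
    ← intervalIntegral.smul_integral_comp_mul_right, ← intervalIntegral.integral_smul]
  refine intervalIntegral.integral_congr fun s hs => ?_
  have hs0 : 0 < s := (lt_min hS hT).trans_le hs.1
  rcases eq_or_ne y 0 with rfl | hy
  · simp
  · simp only [smul_eq_mul, Real.sinc_of_ne_zero (mul_ne_zero hs0.ne' hy)]
    field_simp

lemma integral_Ioi_exp_neg_mul {s : ℝ} (hs : 0 < s) :
    ∫ u in Ioi (0 : ℝ), Real.exp (-s * u) = s⁻¹ := by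
  rw [integral_exp_mul_Ioi (neg_lt_zero.2 hs)]
  simp

lemma integral_exp_neg_mul_mul_sin (u T : ℝ) :
    ∫ s in (0 : ℝ)..T, Real.exp (-s * u) * Real.sin s =
      (1 + u ^ 2)⁻¹ - Real.exp (-T * u) * (Real.cos T + u * Real.sin T) / (1 + u ^ 2) := by
  have hderiv : ∀ s : ℝ, HasDerivAt
      (fun s => -(Real.exp (-s * u) * (Real.cos s + u * Real.sin s) / (1 + u ^ 2)))
      (Real.exp (-s * u) * Real.sin s) s := by
    intro s
    have hexp : HasDerivAt (fun s => Real.exp (-s * u)) (Real.exp (-s * u) * (-1 * u)) s :=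
      ((hasDerivAt_neg s).mul_const u).exp
    have htrig := (Real.hasDerivAt_cos s).add ((Real.hasDerivAt_sin s).const_mul u)
    refine ((hexp.mul htrig).div_const (1 + u ^ 2)).neg.congr_deriv ?_
    simp only [Pi.add_apply]
    field_simp
    ring
  rw [intervalIntegral.integral_eq_sub_of_hasDerivAt (fun s _ => hderiv s)
    (Continuous.intervalIntegrable (by fun_prop) _ _)]
  simp only [neg_mul, neg_zero, zero_mul, Real.exp_zero, Real.cos_zero, Real.sin_zero, mul_zero,
    add_zero, mul_one, one_div, sub_neg_eq_add]
  ring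

lemma integrable_exp_neg_mul_mul_sin (T : ℝ) :
    Integrable (Function.uncurry fun s u : ℝ => Real.exp (-s * u) * Real.sin s)
      ((volume.restrict (Ioc 0 T)).prod (volume.restrict (Ioi 0))) := by
  rw [integrable_prod_iff
    (Continuous.aestronglyMeasurable (by simp only [Function.uncurry_def]; fun_prop))]
  constructor
  · filter_upwards [ae_restrict_mem measurableSet_Ioc] with s hs
    exact (integrableOn_exp_mul_Ioi (neg_lt_zero.2 hs.1) 0).mul_const (Real.sin s)
  · refine (Real.continuous_sinc.abs.integrableOn_Ioc (a := 0) (b := T)).congr ?_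
    filter_upwards [ae_restrict_mem measurableSet_Ioc] with s hs
    simp only [Function.uncurry, norm_mul, Real.norm_eq_abs, Real.abs_exp]
    rw [integral_mul_const, integral_Ioi_exp_neg_mul hs.1, Real.sinc_of_ne_zero hs.1.ne', abs_div,
      abs_of_pos hs.1, div_eq_inv_mul]

lemma sineIntegral_eq_integral_Ioi {T : ℝ} (hT : 0 ≤ T) :
    sineIntegral T = ∫ u in Ioi (0 : ℝ),
      ((1 + u ^ 2)⁻¹ - Real.exp (-T * u) * (Real.cos T + u * Real.sin T) / (1 + u ^ 2)) :=
  calc sineIntegral T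
      = ∫ s in Ioc 0 T, ∫ u in Ioi (0 : ℝ), Real.exp (-s * u) * Real.sin s := by
        rw [sineIntegral, intervalIntegral.integral_of_le hT]
        refine setIntegral_congr_fun measurableSet_Ioc fun s hs => ?_
        rw [integral_mul_const, integral_Ioi_exp_neg_mul hs.1, Real.sinc_of_ne_zero hs.1.ne',
          div_eq_inv_mul]
    _ = ∫ u in Ioi (0 : ℝ), ∫ s in Ioc 0 T, Real.exp (-s * u) * Real.sin s :=
        integral_integral_swap (integrable_exp_neg_mul_mul_sin T)
    _ = _ := by
        simp_rw [← intervalIntegral.integral_of_le hT, integral_exp_neg_mul_mul_sin]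

lemma abs_sineIntegral_sub_pi_div_two_le {T : ℝ} (hT : 0 < T) :
    |sineIntegral T - Real.pi / 2| ≤ T⁻¹ := by
  set r : ℝ → ℝ := fun u => Real.exp (-T * u) * (Real.cos T + u * Real.sin T) / (1 + u ^ 2)
  have hr_le : ∀ u, ‖r u‖ ≤ Real.exp (-T * u) := fun u => by
    have htrig : |Real.cos T + u * Real.sin T| ≤ 1 + u ^ 2 :=
      abs_le_of_sq_le_sq (by
        nlinarith [Real.cos_sq_add_sin_sq T, sq_nonneg (u * Real.cos T - Real.sin T), sq_nonneg u])
        (by positivity)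
    have hpos : 0 < 1 + u ^ 2 := by positivity
    rw [Real.norm_eq_abs, abs_div, abs_mul, Real.abs_exp, abs_of_pos hpos]
    exact div_le_of_le_mul₀ (by positivity) (by positivity) (by gcongr)
  have hexp : IntegrableOn (fun u => Real.exp (-T * u)) (Ioi 0) :=
    integrableOn_exp_mul_Ioi (neg_lt_zero.2 hT) 0
  have hr : IntegrableOn r (Ioi 0) :=
    hexp.mono' (Continuous.aestronglyMeasurable
      (Continuous.div (by fun_prop) (by fun_prop) fun u => by positivity)) (ae_of_all _ hr_le)
  have hsub : sineIntegral T - Real.pi / 2 = -∫ u in Ioi 0, r u := by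
    rw [sineIntegral_eq_integral_Ioi hT.le, integral_sub integrable_inv_one_add_sq.integrableOn hr,
      integral_Ioi_inv_one_add_sq, Real.arctan_zero]
    ring
  rw [hsub, abs_neg, ← integral_Ioi_exp_neg_mul hT]
  exact norm_integral_le_of_norm_le hexp (ae_of_all _ hr_le)

lemma tendsto_sineIntegral_atTop : Tendsto sineIntegral atTop (𝓝 (Real.pi / 2)) := by
  rw [tendsto_iff_dist_tendsto_zero]
  refine squeeze_zero' (Eventually.of_forall fun _ => dist_nonneg) ?_ tendsto_inv_atTop_zero
  filter_upwards [eventually_gt_atTop 0] with T hT using abs_sineIntegral_sub_pi_div_two_le hT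

lemma abs_sineIntegral_le (T : ℝ) : |sineIntegral T| ≤ 3 := by
  wlog hT : 0 ≤ T generalizing T
  · rw [← abs_neg, ← sineIntegral_neg]
    exact this _ (by linarith)
  rcases le_total T 1 with h | h
  · have hle : ‖∫ s in (0 : ℝ)..T, Real.sinc s‖ ≤ 1 * |T - 0| :=
      intervalIntegral.norm_integral_le_of_norm_le_const fun s _ => Real.abs_sinc_le_one s
    rw [sub_zero, abs_of_nonneg hT, one_mul] at hle
    exact hle.trans (by linarith)
  · have hle := (abs_sineIntegral_sub_pi_div_two_le (by linarith)).trans (inv_le_one_of_one_le₀ h)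
    rw [abs_le] at hle ⊢
    constructor <;> linarith [Real.pi_pos, Real.pi_le_four]

lemma tendsto_sineIntegral_mul_atTop (y : ℝ) :
    Tendsto (fun T => sineIntegral (T * y)) atTop (𝓝 (Real.pi / 2 * SignType.sign y)) := by
  rcases lt_trichotomy y 0 with hy | rfl | hy
  · have hneg := (tendsto_sineIntegral_atTop.comp
      (tendsto_id.atTop_mul_const (neg_pos.2 hy))).neg
    simpa [Function.comp_def, sineIntegral_neg, sign_neg hy] using hneg
  · simp
  · simpa [Function.comp_def, sign_pos hy] using
      tendsto_sineIntegral_atTop.comp (tendsto_id.atTop_mul_const hy)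

lemma tendsto_sineIntegral_mul_sub (y : ℝ) :
    Tendsto (fun P : ℝ × ℝ => sineIntegral (P.1 * y) - sineIntegral (P.2 * y)) (atTop ×ˢ 𝓝[>] 0)
      (𝓝 (Real.pi / 2 * SignType.sign y)) := by
  have hzero : Tendsto (fun S => sineIntegral (S * y)) (𝓝[>] 0) (𝓝 0) := by
    have hcont : Continuous fun S => sineIntegral (S * y) :=
      continuous_sineIntegral.comp (by fun_prop)
    simpa using (hcont.tendsto 0).mono_left nhdsWithin_le_nhds
  simpa using ((tendsto_sineIntegral_mul_atTop y).comp tendsto_fst).sub (hzero.comp tendsto_snd)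

end SineIntegral

section SymmIntegral

variable {E : Type*} [NormedAddCommGroup E] {h h₁ h₂ : ℝ → E} {S T : ℝ}

lemma intervalIntegrable_of_continuousOn_compl_zero (hh : ContinuousOn h {0}ᶜ) (hS : 0 < S)
    (hT : 0 < T) :
    IntervalIntegrable h volume (-T) (-S) ∧ IntervalIntegrable h volume S T := by
  constructor <;> refine (hh.mono fun s hs => ?_).intervalIntegrable <;> rintro rfl <;>
    rcases mem_uIcc.1 hs with hs | hs <;> linarith

variable [NormedSpace ℝ E]

/-- The integral of `h` over the symmetric region `S < |s| < T`, encoded as a sum of two interval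
integrals, which is meant for `0 < S < T`. -/
noncomputable def symmIntegral (h : ℝ → E) (S T : ℝ) : E :=
  (∫ s in (-T)..(-S), h s) + ∫ s in S..T, h s

lemma symmIntegral_eq_integral_add_comp_neg (hh : ContinuousOn h {0}ᶜ) (hS : 0 < S) (hT : 0 < T) :
    symmIntegral h S T = ∫ s in S..T, (h s + h (-s)) := by
  obtain ⟨hneg, hpos⟩ := intervalIntegrable_of_continuousOn_compl_zero hh hS hT
  have hneg' : IntervalIntegrable (fun s => h (-s)) volume S T := by
    simpa using ((IntervalIntegrable.iff_comp_neg enorm_ne_top).1 hneg).symm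
  rw [symmIntegral, ← intervalIntegral.integral_comp_neg, add_comm,
    intervalIntegral.integral_add hpos hneg']

lemma symmIntegral_sub (hh₁ : ContinuousOn h₁ {0}ᶜ) (hh₂ : ContinuousOn h₂ {0}ᶜ) (hS : 0 < S)
    (hT : 0 < T) :
    symmIntegral (fun s => h₁ s - h₂ s) S T = symmIntegral h₁ S T - symmIntegral h₂ S T := by
  obtain ⟨hneg₁, hpos₁⟩ := intervalIntegrable_of_continuousOn_compl_zero hh₁ hS hT
  obtain ⟨hneg₂, hpos₂⟩ := intervalIntegrable_of_continuousOn_compl_zero hh₂ hS hT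
  rw [symmIntegral, intervalIntegral.integral_sub hneg₁ hneg₂,
    intervalIntegral.integral_sub hpos₁ hpos₂, symmIntegral, symmIntegral, add_sub_add_comm]

end SymmIntegral

section GilPelaez

variable (μ : Measure ℝ)

lemma charFun_map_const_sub (x s : ℝ) :
    charFun (μ.map (x - ·)) s = Complex.exp (I * x * s) * charFun μ (-s) := by
  rw [charFun_apply_real, charFun_apply_real, ← integral_const_mul,
    integral_map (by fun_prop) (Continuous.aestronglyMeasurable (by fun_prop))]
  congr with y
  rw [← Complex.exp_add]
  push_cast
  ring_nf

variable [IsFiniteMeasure μ]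

lemma continuousOn_charFun_div : ContinuousOn (fun s : ℝ => charFun μ s / (I * s)) {0}ᶜ :=
  continuous_charFun.continuousOn.div (by fun_prop) fun s hs => by simpa using hs

lemma im_charFun (s : ℝ) : (charFun μ s).im = ∫ y, Real.sin (s * y) ∂μ := by
  have hint : Integrable (fun y : ℝ => Complex.exp (s * y * I)) μ :=
    Integrable.of_bound (Continuous.aestronglyMeasurable (by fun_prop)) 1
      (ae_of_all _ fun y => by simp [Complex.norm_exp])
  rw [charFun_apply_real, ← RCLike.im_to_complex, ← integral_im hint]
  simp_rw [RCLike.im_to_complex, ← Complex.ofReal_mul, Complex.exp_ofReal_mul_I_im]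

lemma charFun_div_add_charFun_neg_div (s : ℝ) :
    charFun μ s / (I * s) + charFun μ (-s) / (I * (-s : ℝ)) =
      ((2 * ∫ y, Real.sin (s * y) / s ∂μ : ℝ) : ℂ) := by
  rw [integral_div, ← im_charFun, charFun_neg, Complex.ofReal_neg, mul_neg, div_neg,
    ← sub_eq_add_neg, ← sub_div, Complex.sub_conj]
  push_cast
  rw [mul_comm _ I, mul_div_mul_left _ _ Complex.I_ne_zero, mul_div_assoc]

lemma integrable_sin_mul_div_prod {S T : ℝ} (hS : 0 < S) (hT : 0 < T) :
    Integrable (Function.uncurry fun s y : ℝ => Real.sin (s * y) / s)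
      ((volume.restrict (uIoc S T)).prod μ) := by
  have hinv : IntegrableOn (fun s : ℝ => s⁻¹) (uIoc S T) :=
    intervalIntegrable_iff.1 (intervalIntegral.intervalIntegrable_inv
      (fun s hs => ((lt_min hS hT).trans_le hs.1).ne') continuousOn_id)
  exact (hinv.comp_fst μ).bdd_mul (f := fun z : ℝ × ℝ => Real.sin (z.1 * z.2))
    (Continuous.aestronglyMeasurable (by fun_prop)) (ae_of_all _ fun z => Real.abs_sin_le_one _)

lemma symmIntegral_charFun_div {S T : ℝ} (hS : 0 < S) (hT : 0 < T) :
    symmIntegral (fun s : ℝ => charFun μ s / (I * s)) S T =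
      ((2 * ∫ y, (sineIntegral (T * y) - sineIntegral (S * y)) ∂μ : ℝ) : ℂ) := by
  rw [symmIntegral_eq_integral_add_comp_neg (continuousOn_charFun_div μ) hS hT]
  simp_rw [charFun_div_add_charFun_neg_div μ]
  rw [intervalIntegral.integral_ofReal, intervalIntegral.integral_const_mul,
    intervalIntegral_integral_swap (integrable_sin_mul_div_prod μ hS hT)]
  simp_rw [integral_sin_mul_div hS hT]

lemma integral_sign : ∫ y, (SignType.sign y : ℝ) ∂μ = μ.real (Ioi 0) - μ.real (Iio 0) := by
  have hsign : (fun y : ℝ => (SignType.sign y : ℝ)) =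
      fun y => (Ioi (0 : ℝ)).indicator 1 y - (Iio (0 : ℝ)).indicator 1 y := by
    ext y
    rcases lt_trichotomy y 0 with hy | rfl | hy
    · simp [sign_neg hy, hy, hy.le]
    · simp
    · simp [sign_pos hy, hy, hy.le]
  rw [hsign, integral_sub ((integrable_const 1).indicator measurableSet_Ioi)
      ((integrable_const 1).indicator measurableSet_Iio),
    integral_indicator_one measurableSet_Ioi, integral_indicator_one measurableSet_Iio]

lemma tendsto_symmIntegral_charFun_div :
    Tendsto (fun P : ℝ × ℝ => symmIntegral (fun s : ℝ => charFun μ s / (I * s)) P.2 P.1)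
      (atTop ×ˢ 𝓝[>] 0) (𝓝 ((Real.pi * (μ.real (Ioi 0) - μ.real (Iio 0)) : ℝ) : ℂ)) := by
  have hlim : Tendsto
      (fun P : ℝ × ℝ => ∫ y, (sineIntegral (P.1 * y) - sineIntegral (P.2 * y)) ∂μ)
      (atTop ×ˢ 𝓝[>] 0) (𝓝 (∫ y, Real.pi / 2 * SignType.sign y ∂μ)) := by
    refine tendsto_integral_filter_of_dominated_convergence (fun _ => 6)
      (Eventually.of_forall fun P => Continuous.aestronglyMeasurable ?_)
      (Eventually.of_forall fun P => ae_of_all _ fun y => ?_) (integrable_const _)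
      (ae_of_all _ tendsto_sineIntegral_mul_sub)
    · exact (continuous_sineIntegral.comp (by fun_prop)).sub
        (continuous_sineIntegral.comp (by fun_prop))
    · refine (abs_sub _ _).trans ?_
      linarith [abs_sineIntegral_le (P.1 * y), abs_sineIntegral_le (P.2 * y)]
  have hval : Real.pi * (μ.real (Ioi 0) - μ.real (Iio 0)) =
      2 * ∫ y, Real.pi / 2 * (SignType.sign y : ℝ) ∂μ := by
    rw [integral_const_mul, integral_sign]
    ring
  rw [hval]
  refine ((Complex.continuous_ofReal.tendsto _).comp (hlim.const_mul 2)).congr' ?_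
  filter_upwards [(eventually_gt_atTop 0).prod_mk self_mem_nhdsWithin] with P ⟨hT, hS⟩
  exact (symmIntegral_charFun_div μ hS hT).symm

/-- The Gil-Pelaez inversion formula. -/
lemma tendsto_symmIntegral_exp_mul_charFun_div (x : ℝ) :
    Tendsto (fun P : ℝ × ℝ => symmIntegral
        (fun s : ℝ => Complex.exp (I * x * s) * (charFun μ (-s) / (I * s))) P.2 P.1)
      (atTop ×ˢ 𝓝[>] 0) (𝓝 ((Real.pi * (μ.real (Iio x) - μ.real (Ioi x)) : ℝ) : ℂ)) := by
  have hlim := tendsto_symmIntegral_charFun_div (μ.map (x - ·))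
  have hmeas : Measurable fun y : ℝ => x - y := by fun_prop
  rw [map_measureReal_apply hmeas measurableSet_Ioi,
    map_measureReal_apply hmeas measurableSet_Iio] at hlim
  simpa [charFun_map_const_sub, mul_div_assoc] using hlim

end GilPelaez

section FourierStieltjes

section Fubini

variable {E : Type*} [NormedAddCommGroup E] {h : ℝ → E} {X Y : ℝ} (μ : Measure ℝ)

lemma integrable_indicator_Ioi_prod [IsFiniteMeasure μ] (hh : IntervalIntegrable h volume X Y) :
    Integrable (Function.uncurry fun t y : ℝ => (Ioi y).indicator h t)
      ((volume.restrict (uIoc X Y)).prod μ) :=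
  ((intervalIntegrable_iff.1 hh).comp_fst μ).indicator
    (measurableSet_lt measurable_snd measurable_fst)

variable [NormedSpace ℝ E]

lemma intervalIntegral_indicator_Ioi (h : ℝ → E) (hXY : X ≤ Y) (y : ℝ) :
    ∫ t in X..Y, (Ioi y).indicator h t = ∫ t in (max X (min y Y))..Y, h t := by
  have hset : Ioc X Y ∩ Ioi y = Ioc (max X (min y Y)) Y := by
    ext t
    simp only [mem_inter_iff, mem_Ioc, mem_Ioi]
    grind
  rw [intervalIntegral.integral_of_le hXY, setIntegral_indicator measurableSet_Ioi, hset,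
    intervalIntegral.integral_of_le (max_le hXY (min_le_right _ _))]

variable [CompleteSpace E]

lemma integral_indicator_Ioi_apply (h : ℝ → E) (t : ℝ) :
    ∫ y, (Ioi y).indicator h t ∂μ = μ.real (Iio t) • h t :=
  integral_indicator_const (h t) measurableSet_Iio

variable [IsFiniteMeasure μ]

lemma intervalIntegrable_measureReal_Iio_smul (hh : IntervalIntegrable h volume X Y) :
    IntervalIntegrable (fun t => μ.real (Iio t) • h t) volume X Y := by
  simp_rw [intervalIntegrable_iff, ← integral_indicator_Ioi_apply μ h]
  exact (integrable_indicator_Ioi_prod μ hh).integral_prod_left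

lemma integral_measureReal_Iio_smul (hh : IntervalIntegrable h volume X Y) (hXY : X ≤ Y) :
    ∫ t in X..Y, μ.real (Iio t) • h t = ∫ y, (∫ t in (max X (min y Y))..Y, h t) ∂μ := by
  simp_rw [← integral_indicator_Ioi_apply μ h]
  rw [intervalIntegral_integral_swap (integrable_indicator_Ioi_prod μ hh)]
  simp_rw [intervalIntegral_indicator_Ioi h hXY]

end Fubini

variable {s X Y : ℝ}

lemma norm_exp_neg_I_mul (s t : ℝ) : ‖Complex.exp (-(I * s * t))‖ = 1 := by
  simp [Complex.norm_exp]

lemma integral_exp_neg_I_mul (hs : s ≠ 0) (a b : ℝ) :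
    ∫ t in a..b, Complex.exp (-(I * s * t)) =
      (Complex.exp (-(I * s * a)) - Complex.exp (-(I * s * b))) / (I * s) := by
  simp_rw [← neg_mul (I * (s : ℂ))]
  rw [integral_exp_mul_complex (by simpa using hs), div_neg, ← neg_div, neg_sub]

lemma integral_measureReal_Iio_smul_exp (μ : Measure ℝ) [IsFiniteMeasure μ] (hs : s ≠ 0)
    (hXY : X ≤ Y) :
    ∫ t in X..Y, μ.real (Iio t) • Complex.exp (-(I * s * t)) =
      (∫ y, Complex.exp (-(I * s * (max X (min y Y) : ℝ))) ∂μ -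
        μ.real univ * Complex.exp (-(I * s * Y))) / (I * s) := by
  have hint : Integrable (fun y : ℝ => Complex.exp (-(I * s * (max X (min y Y) : ℝ)))) μ :=
    Integrable.of_bound (Continuous.aestronglyMeasurable (by fun_prop)) 1
      (ae_of_all _ fun y => (norm_exp_neg_I_mul s _).le)
  rw [integral_measureReal_Iio_smul μ (Continuous.intervalIntegrable (by fun_prop) _ _) hXY]
  simp_rw [integral_exp_neg_I_mul hs]
  rw [integral_div, integral_sub hint (integrable_const _), integral_const, Complex.real_smul]

lemma tendsto_integral_exp_max_min (μ : Measure ℝ) [IsFiniteMeasure μ] (s : ℝ) :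
    Tendsto (fun P : ℝ × ℝ => ∫ y, Complex.exp (-(I * s * (max P.1 (min y P.2) : ℝ))) ∂μ)
      (atBot ×ˢ atTop) (𝓝 (charFun μ (-s))) := by
  have hval : charFun μ (-s) = ∫ y : ℝ, Complex.exp (-(I * s * y)) ∂μ := by
    rw [charFun_apply_real]
    congr with y
    push_cast
    ring_nf
  rw [hval]
  refine tendsto_integral_filter_of_dominated_convergence (fun _ => 1)
    (Eventually.of_forall fun P => Continuous.aestronglyMeasurable (by fun_prop))
    (Eventually.of_forall fun P => ae_of_all _ fun y => (norm_exp_neg_I_mul s _).le)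
    (integrable_const _) (ae_of_all _ fun y => tendsto_const_nhds.congr' ?_)
  filter_upwards [(eventually_le_atBot y).prod_mk (eventually_ge_atTop y)] with P hP
  rw [min_eq_left hP.2, max_eq_right hP.1]

/-- The Fourier–Stieltjes transform `∫ e^{-ist} dσ(t)` of a signed measure `σ`, expressed through
its Jordan decomposition. The sign in `charFun ρ (-s)` is due to `charFun ρ s` being
`∫ e^{ist} dρ(t)`. -/
noncomputable def fourierStieltjes (σ : SignedMeasure ℝ) (s : ℝ) : ℂ :=
  charFun σ.toJordanDecomposition.posPart (-s) - charFun σ.toJordanDecomposition.negPart (-s)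

variable (σ : SignedMeasure ℝ)

lemma integral_exp_mul_signedMeasure_Iio (hσ : σ univ = 0) (hs : s ≠ 0) (hXY : X ≤ Y) :
    ∫ t in X..Y, Complex.exp (-(I * s * t)) * σ (Iio t) =
      (∫ y, Complex.exp (-(I * s * (max X (min y Y) : ℝ))) ∂σ.toJordanDecomposition.posPart -
        ∫ y, Complex.exp (-(I * s * (max X (min y Y) : ℝ))) ∂σ.toJordanDecomposition.negPart) /
        (I * s) := by
  set μ := σ.toJordanDecomposition.posPart
  set ν := σ.toJordanDecomposition.negPart
  have hmass : μ.real univ = ν.real univ := by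
    rw [← sub_eq_zero, ← σ.apply_eq_posPart_real_sub_negPart_real .univ, hσ]
  have hsub : ∀ t : ℝ, Complex.exp (-(I * s * t)) * σ (Iio t) =
      μ.real (Iio t) • Complex.exp (-(I * s * t)) - ν.real (Iio t) • Complex.exp (-(I * s * t)) :=
    fun t => by
      rw [← sub_smul, ← σ.apply_eq_posPart_real_sub_negPart_real measurableSet_Iio,
        Complex.real_smul, mul_comm]
  have hexp : IntervalIntegrable (fun t : ℝ => Complex.exp (-(I * s * t))) volume X Y :=
    Continuous.intervalIntegrable (by fun_prop) _ _
  simp_rw [hsub]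
  rw [intervalIntegral.integral_sub (intervalIntegrable_measureReal_Iio_smul μ hexp)
      (intervalIntegrable_measureReal_Iio_smul ν hexp),
    integral_measureReal_Iio_smul_exp μ hs hXY, integral_measureReal_Iio_smul_exp ν hs hXY, hmass,
    ← sub_div, sub_sub_sub_cancel_right]

lemma tendsto_integral_exp_mul_signedMeasure_Iio (hσ : σ univ = 0) (hs : s ≠ 0) :
    Tendsto (fun P : ℝ × ℝ => ∫ t in P.1..P.2, Complex.exp (-(I * s * t)) * σ (Iio t))
      (atBot ×ˢ atTop) (𝓝 (fourierStieltjes σ s / (I * s))) := by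
  refine (((tendsto_integral_exp_max_min _ s).sub
    (tendsto_integral_exp_max_min _ s)).div_const _).congr' ?_
  filter_upwards [(eventually_le_atBot 0).prod_mk (eventually_ge_atTop 0)] with P hP
  exact (integral_exp_mul_signedMeasure_Iio σ hσ hs (hP.1.trans hP.2)).symm

lemma continuousOn_exp_mul_charFun_neg_div (μ : Measure ℝ) [IsFiniteMeasure μ] (x : ℝ) :
    ContinuousOn (fun s : ℝ => Complex.exp (I * x * s) * (charFun μ (-s) / (I * s))) {0}ᶜ := by
  simpa only [charFun_map_const_sub, mul_div_assoc] using
    continuousOn_charFun_div (μ.map (x - ·))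

lemma tendsto_symmIntegral_exp_mul_fourierStieltjes_div (x : ℝ) :
    Tendsto (fun P : ℝ × ℝ => symmIntegral
        (fun s : ℝ => Complex.exp (I * x * s) * (fourierStieltjes σ s / (I * s))) P.2 P.1)
      (atTop ×ˢ 𝓝[>] 0) (𝓝 ((Real.pi * (σ (Iio x) - σ (Ioi x)) : ℝ) : ℂ)) := by
  set μ := σ.toJordanDecomposition.posPart with hμ
  set ν := σ.toJordanDecomposition.negPart with hν
  have hval : Real.pi * (σ (Iio x) - σ (Ioi x)) =
      Real.pi * (μ.real (Iio x) - μ.real (Ioi x)) -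
        Real.pi * (ν.real (Iio x) - ν.real (Ioi x)) := by
    rw [σ.apply_eq_posPart_real_sub_negPart_real measurableSet_Iio,
      σ.apply_eq_posPart_real_sub_negPart_real measurableSet_Ioi]
    ring
  rw [hval, Complex.ofReal_sub]
  refine ((tendsto_symmIntegral_exp_mul_charFun_div μ x).sub
    (tendsto_symmIntegral_exp_mul_charFun_div ν x)).congr' ?_
  filter_upwards [(eventually_gt_atTop 0).prod_mk self_mem_nhdsWithin] with P ⟨hT, hS⟩
  rw [← symmIntegral_sub (continuousOn_exp_mul_charFun_neg_div μ x)
    (continuousOn_exp_mul_charFun_neg_div ν x) hS hT]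
  simp_rw [fourierStieltjes, ← hμ, ← hν, sub_div, mul_sub]

end FourierStieltjes

section BoundedVariation

variable {g : ℝ → ℝ} (hg : BoundedVariationOn g univ)

include hg in
lemma ae_leftLim_eq_of_boundedVariationOn : ∀ᵐ t, g.leftLim t = g t := by
  filter_upwards [hg.locallyBoundedVariationOn.ae_differentiableAt] with t ht
  exact ht.continuousAt.continuousWithinAt.leftLim_eq

theorem tendsto_integral_exp_mul_of_boundedVariationOn (htop : Tendsto g atTop (𝓝 0))
    (hbot : Tendsto g atBot (𝓝 0)) {s : ℝ} (hs : s ≠ 0) :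
    Tendsto (fun P : ℝ × ℝ => ∫ t in P.1..P.2, Complex.exp (-(I * s * t)) * g t)
      (atBot ×ˢ atTop) (𝓝 (fourierStieltjes hg.vectorMeasure s / (I * s))) := by
  have hmass : hg.vectorMeasure univ = 0 := by
    rw [hg.vectorMeasure_univ, htop.limUnder_eq, hbot.limUnder_eq, sub_zero]
  refine (tendsto_integral_exp_mul_signedMeasure_Iio _ hmass hs).congr fun P => ?_
  refine intervalIntegral.integral_congr_ae ?_
  filter_upwards [ae_leftLim_eq_of_boundedVariationOn hg] with t ht _
  rw [hg.vectorMeasure_Iio, hbot.limUnder_eq, sub_zero, ht]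

theorem tendsto_symmIntegral_of_boundedVariationOn (htop : Tendsto g atTop (𝓝 0))
    (hbot : Tendsto g atBot (𝓝 0)) (x : ℝ) :
    Tendsto (fun P : ℝ × ℝ => 1 / (2 * (Real.pi : ℂ)) * symmIntegral (fun s : ℝ =>
        Complex.exp (I * x * s) * (fourierStieltjes hg.vectorMeasure s / (I * s))) P.2 P.1)
      (atTop ×ˢ 𝓝[>] 0) (𝓝 (((g.leftLim x + g.rightLim x) / 2 : ℝ) : ℂ)) := by
  have hlim := (tendsto_symmIntegral_exp_mul_fourierStieltjes_div hg.vectorMeasure x).const_mul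
    (1 / (2 * (Real.pi : ℂ)))
  rw [hg.vectorMeasure_Iio, hg.vectorMeasure_Ioi, htop.limUnder_eq, hbot.limUnder_eq] at hlim
  convert hlim using 2
  push_cast
  field_simp [Complex.ofReal_ne_zero.2 Real.pi_ne_zero]
  ring

end BoundedVariation

section Heaviside

lemma heaviside_of_pos {x : ℝ} (hx : 0 < x) : heaviside x = 1 :=
  if_pos hx

lemma heaviside_of_neg {x : ℝ} (hx : x < 0) : heaviside x = 0 := by
  simp [heaviside, hx.not_gt, hx.ne]

lemma heaviside_neg (x : ℝ) : heaviside (-x) = 1 - heaviside x := by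
  rcases lt_trichotomy x 0 with hx | rfl | hx
  · rw [heaviside_of_pos (neg_pos.2 hx), heaviside_of_neg hx, sub_zero]
  · norm_num [heaviside]
  · rw [heaviside_of_neg (neg_lt_zero.2 hx), heaviside_of_pos hx, sub_self]

lemma continuousAt_heaviside {x : ℝ} (hx : x ≠ 0) : ContinuousAt heaviside x := by
  rcases hx.lt_or_gt with hx | hx
  · exact continuousAt_const.congr
      (eventually_of_mem (Iio_mem_nhds hx) fun _ ht => (heaviside_of_neg ht).symm)
  · exact continuousAt_const.congr
      (eventually_of_mem (Ioi_mem_nhds hx) fun _ ht => (heaviside_of_pos ht).symm)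

lemma exists_tendsto_heaviside_average_eq (x : ℝ) :
    ∃ a b : ℝ, Tendsto heaviside (𝓝[<] x) (𝓝 a) ∧ Tendsto heaviside (𝓝[>] x) (𝓝 b) ∧
      (a + b) / 2 = heaviside x := by
  rcases eq_or_ne x 0 with rfl | hx
  · refine ⟨0, 1, tendsto_const_nhds.congr' ?_, tendsto_const_nhds.congr' ?_, by simp [heaviside]⟩
    · filter_upwards [self_mem_nhdsWithin] with t ht using (heaviside_of_neg ht).symm
    · filter_upwards [self_mem_nhdsWithin] with t ht using (heaviside_of_pos ht).symm
  · have hcont := (continuousAt_heaviside hx).tendsto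
    exact ⟨_, _, hcont.mono_left nhdsWithin_le_nhds, hcont.mono_left nhdsWithin_le_nhds,
      add_self_div_two _⟩

lemma tendsto_sub_heaviside_mul_sub {f p q : ℝ → ℝ} {l : Filter ℝ} {x y c : ℝ}
    (hp : Tendsto p l (𝓝 (p x))) (hq : Tendsto q l (𝓝 (q x))) (hf : Tendsto f l (𝓝 y))
    (hc : Tendsto heaviside l (𝓝 c)) :
    Tendsto (fun t => f t - heaviside t * p t - heaviside (-t) * q t) l
      (𝓝 (y - c * p x - (1 - c) * q x)) := by
  simp_rw [heaviside_neg]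
  exact (hf.sub (hc.mul hp)).sub ((hc.const_sub 1).mul hq)

end Heaviside

theorem fourier_inversion_polynomial_growth_general (f p q : ℝ → ℝ)
    (hp : Continuous p) (hq : Continuous q)
    (hbv : BoundedVariationOn (fun t => f t - heaviside t * p t - heaviside (-t) * q t) univ)
    (htop : Tendsto (fun t => f t - heaviside t * p t - heaviside (-t) * q t) atTop (𝓝 0))
    (hbot : Tendsto (fun t => f t - heaviside t * p t - heaviside (-t) * q t) atBot (𝓝 0)) :
    ∃ G : ℝ → ℂ,
      (∀ s : ℝ, s ≠ 0 → Tendsto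
        (fun P : ℝ × ℝ => ∫ t in P.1..P.2, Complex.exp (-(I * s * t)) *
          ((f t - heaviside t * p t - heaviside (-t) * q t : ℝ) : ℂ))
        (atBot ×ˢ atTop) (𝓝 (G s))) ∧
      ∀ x fl fr : ℝ, Tendsto f (𝓝[<] x) (𝓝 fl) → Tendsto f (𝓝[>] x) (𝓝 fr) →
        Tendsto
          (fun P : ℝ × ℝ => 1 / (2 * (Real.pi : ℂ)) *
            symmIntegral (fun s : ℝ => Complex.exp (I * x * s) * G s) P.2 P.1)
          (atTop ×ˢ 𝓝[>] 0)
          (𝓝 (((fl + fr) / 2 - heaviside x * p x - heaviside (-x) * q x : ℝ) : ℂ)) := by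
  refine ⟨fun s => fourierStieltjes hbv.vectorMeasure s / (I * s),
    fun s hs => tendsto_integral_exp_mul_of_boundedVariationOn hbv htop hbot hs,
    fun x fl fr hfl hfr => ?_⟩
  obtain ⟨a, b, ha, hb, hab⟩ := exists_tendsto_heaviside_average_eq x
  have hleft := leftLim_eq_of_tendsto
    (tendsto_sub_heaviside_mul_sub hp.continuousWithinAt hq.continuousWithinAt hfl ha)
  have hright := rightLim_eq_of_tendsto
    (tendsto_sub_heaviside_mul_sub hp.continuousWithinAt hq.continuousWithinAt hfr hb)
  convert tendsto_symmIntegral_of_boundedVariationOn hbv htop hbot x using 3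
  rw [hleft, hright, heaviside_neg, ← hab]
  ring

/-- Inversion for a function asymptotic to polynomials `p₊`, `p₋` at `±∞`: with
`g(x) = f(x) - H(x)p₊(x) - H(-x)p₋(x)` of bounded variation on `ℝ` and tending to `0` at
`±∞`, the improper-integral Fourier transform `ĝ(s)` exists for `s ≠ 0` and
`(f(x-)+f(x+))/2 = (1/(2π)) lim_{T→∞,S→0⁺} ∫_{S<|s|<T} e^{ixs} ĝ(s) ds
+ H(x)p₊(x) + H(-x)p₋(x)`. -/
theorem fourier_inversion_polynomial_growth (f : ℝ → ℝ)
    (pplus pminus : Polynomial ℝ)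
    (hbv : BoundedVariationOn
      (fun t : ℝ => f t - heaviside t * pplus.eval t - heaviside (-t) * pminus.eval t)
      Set.univ)
    (htop : Filter.Tendsto
      (fun t : ℝ => f t - heaviside t * pplus.eval t - heaviside (-t) * pminus.eval t)
      Filter.atTop (nhds 0))
    (hbot : Filter.Tendsto
      (fun t : ℝ => f t - heaviside t * pplus.eval t - heaviside (-t) * pminus.eval t)
      Filter.atBot (nhds 0)) :
    ∃ G : ℝ → ℂ,
      (∀ s : ℝ, s ≠ 0 → Filter.Tendsto
        (fun P : ℝ × ℝ =>
          ∫ t in P.1..P.2, Complex.exp (-(Complex.I * s * t)) *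
            ((f t - heaviside t * pplus.eval t - heaviside (-t) * pminus.eval t : ℝ) : ℂ))
        (Filter.atBot ×ˢ Filter.atTop) (nhds (G s))) ∧
      ∀ x fl fr : ℝ,
        Filter.Tendsto f (nhdsWithin x (Set.Iio x)) (nhds fl) →
        Filter.Tendsto f (nhdsWithin x (Set.Ioi x)) (nhds fr) →
        Filter.Tendsto
          (fun P : ℝ × ℝ => (1 / (2 * (Real.pi : ℂ))) *
            ((∫ s in (-P.1)..(-P.2), Complex.exp (Complex.I * x * s) * G s) +
              ∫ s in P.2..P.1, Complex.exp (Complex.I * x * s) * G s))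
          (Filter.atTop ×ˢ nhdsWithin 0 (Set.Ioi 0))
          (nhds (((fl + fr) / 2 - heaviside x * pplus.eval x
            - heaviside (-x) * pminus.eval x : ℝ) : ℂ)) :=
  fourier_inversion_polynomial_growth_general f pplus.eval pminus.eval pplus.continuous
    pminus.continuous hbv htop hbot
end

section
/- Let 0 < α < 2, let C_α = lim_{R→∞} ∫_0^R sin(t)·t^{-α} dt, and define f̂(s) = −2i·sgn(s)·|s|^{α−1}·C_α for s ≠ 0 (f̂ is Lebesgue integrable on any neighbourhood of 0 since α − 1 > −1). Then for each x ≠ 0, with T_n = (2n+1)π/(2|x|), one has sgn(x)|x|^{-α} = (1/(2π)) · lim_{n→∞} ∫_{-T_n}^{T_n} e^{ixs} f̂(s) ds. -/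
/-! Both improper integrals `C = ∫₀^∞ sin t · t^(-α) dt` and `D = lim ∫₀^T sin s · s^(α-1) ds`
(along the zeros `T` of the cosine) have closed forms, but only the product `C * D = π / 2` matters.
Since `∫₀^∞ sin (s t) · t^(-α) dt = C * s^(α-1)`, exchanging the integrals gives
`C * ∫₀^T sin s · s^(α-1) ds = ∫₀^∞ K_T(t) · t^(-α) dt` for `K_T(t) = ∫₀^T sin s · sin (s t) ds`,
and `K_T(t) = t · sin T · cos (T t) / (1 - t²)` as soon as `cos T = 0`. For `α = 1` the left side is
the Dirichlet integral `π / 2`. Subtracting this case removes the singularity at `t = 1`, and what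
remains is, up to the factor `sin T`, the cosine transform at `T` of the integrable function
`(t^(1-α) - 1) / (1 - t²)`, which vanishes as `T → ∞` by the Riemann–Lebesgue lemma. -/

open MeasureTheory Set Filter Topology

section ImproperIntegrals

theorem exists_norm_intervalIntegral_le_of_tendsto {E : Type*} [NormedAddCommGroup E]
    [NormedSpace ℝ E] {f : ℝ → E} {a : ℝ} {l : E}
    (hf : ∀ R, a ≤ R → IntervalIntegrable f volume a R)
    (hl : Tendsto (fun R => ∫ t in a..R, f t) atTop (𝓝 l)) :
    ∃ M, ∀ R, a ≤ R → ‖∫ t in a..R, f t‖ ≤ M := by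
  obtain ⟨R₀, hR₀⟩ := eventually_atTop.1 (hl.norm.eventually_le_const (lt_add_one ‖l‖))
  refine ⟨max (‖l‖ + 1) (∫ t in a..(max a R₀), ‖f t‖), fun R hR => ?_⟩
  rcases le_total R₀ R with h | h
  · exact (hR₀ R h).trans (le_max_left _ _)
  · calc ‖∫ t in a..R, f t‖ ≤ ∫ t in a..R, ‖f t‖ :=
          intervalIntegral.norm_integral_le_integral_norm hR
      _ ≤ ∫ t in a..(max a R₀), ‖f t‖ :=
          intervalIntegral.integral_mono_interval le_rfl hR (h.trans (le_max_right _ _))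
            (Eventually.of_forall fun t => norm_nonneg (f t)) (hf _ (le_max_left _ _)).norm
      _ ≤ _ := le_max_right _ _

theorem continuousOn_Ici_integral {E : Type*} [NormedAddCommGroup E] [NormedSpace ℝ E] {f : ℝ → E}
    {a : ℝ} (hf : ∀ R, a ≤ R → IntervalIntegrable f volume a R) :
    ContinuousOn (fun R => ∫ t in a..R, f t) (Ici a) := by
  intro R hR
  rw [mem_Ici] at hR
  have hR1 : a ≤ R + 1 := by linarith
  have hcont : ContinuousOn (fun R => ∫ t in a..R, f t) (Icc a (R + 1)) := by
    rw [← uIcc_of_le hR1]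
    refine intervalIntegral.continuousOn_primitive_interval ?_
    rw [uIcc_of_le hR1]
    exact (intervalIntegrable_iff_integrableOn_Icc_of_le hR1).1 (hf _ hR1)
  exact (hcont R ⟨hR, by linarith⟩).mono_of_mem_nhdsWithin
    (inter_mem_nhdsWithin (Ici a) (Iic_mem_nhds (lt_add_one R)))

theorem tendsto_integral_mul_comp_mul_atTop {w Φ : ℝ → ℝ} {T M l : ℝ} (hT : 0 ≤ T)
    (hw : IntervalIntegrable w volume 0 T) (hΦ : ContinuousOn Φ (Ici 0))
    (hM : ∀ R, 0 ≤ R → ‖Φ R‖ ≤ M) (hl : Tendsto Φ atTop (𝓝 l)) :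
    Tendsto (fun R => ∫ s in (0 : ℝ)..T, w s * Φ (s * R)) atTop
      (𝓝 ((∫ s in (0 : ℝ)..T, w s) * l)) := by
  rw [← intervalIntegral.integral_mul_const]
  refine intervalIntegral.tendsto_integral_filter_of_dominated_convergence
    (fun s => ‖w s‖ * M) ?_ ?_ (hw.norm.mul_const M) ?_ <;> rw [uIoc_of_le hT]
  · filter_upwards [eventually_ge_atTop 0] with R hR
    exact hw.aestronglyMeasurable.mul ((hΦ.comp (Continuous.continuousOn (by fun_prop))
      fun s hs => mul_nonneg hs.1.le hR).aestronglyMeasurable measurableSet_Ioc)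
  · filter_upwards [eventually_ge_atTop 0] with R hR
    refine Eventually.of_forall fun s hs => ?_
    rw [norm_mul]
    gcongr
    exact hM _ (mul_nonneg hs.1.le hR)
  · exact Eventually.of_forall fun s hs =>
      (hl.comp (tendsto_id.const_mul_atTop hs.1)).const_mul (w s)

theorem tendsto_integral_cos_mul_atTop {f : ℝ → ℝ} (hf : Integrable f) :
    Tendsto (fun T => ∫ t, Real.cos (T * t) * f t) atTop (𝓝 0) := by
  have hscale : Tendsto (fun T : ℝ => T / (2 * Real.pi)) atTop (cocompact ℝ) :=
    (tendsto_id.atTop_div_const Real.two_pi_pos).mono_right atTop_le_cocompact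
  have hRL := (Complex.continuous_re.tendsto 0).comp
    ((Real.zero_at_infty_fourier fun t => (f t : ℂ)).comp hscale)
  refine hRL.congr fun T => ?_
  have hint : Integrable fun t : ℝ =>
      Complex.exp (↑(-2 * Real.pi * t * (T / (2 * Real.pi))) * Complex.I) • (f t : ℂ) :=
    hf.ofReal.bdd_mul (c := 1) (Continuous.aestronglyMeasurable (by fun_prop))
      (Eventually.of_forall fun t => (Complex.norm_exp_ofReal_mul_I _).le)
  simp only [Function.comp_apply, Real.fourier_real_eq_integral_exp_smul]
  rw [← RCLike.re_eq_complex_re, ← integral_re hint]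
  refine integral_congr_ae (Eventually.of_forall fun t => ?_)
  have harg : -2 * Real.pi * t * (T / (2 * Real.pi)) = -(T * t) := by field_simp
  simp only [harg, smul_eq_mul, RCLike.re_eq_complex_re, Complex.re_mul_ofReal,
    Complex.exp_ofReal_mul_I_re, Real.cos_neg]

theorem tendsto_setIntegral_cos_mul_atTop {s : Set ℝ} (hs : MeasurableSet s) {f : ℝ → ℝ}
    (hf : IntegrableOn f s) :
    Tendsto (fun T => ∫ t in s, Real.cos (T * t) * f t) atTop (𝓝 0) := by
  refine (tendsto_integral_cos_mul_atTop (hf.integrable_indicator hs)).congr fun T => ?_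
  rw [← integral_indicator hs]
  simp only [indicator_mul_right]

end ImproperIntegrals

section SineIntegrals

theorem intervalIntegrable_sin_mul_rpow {r : ℝ} (hr : -2 < r) {T : ℝ} (hT : 0 ≤ T) :
    IntervalIntegrable (fun t => Real.sin t * t ^ r) volume 0 T := by
  have hdom : IntervalIntegrable (fun t : ℝ => t ^ (r + 1)) volume 0 T :=
    intervalIntegral.intervalIntegrable_rpow' (by linarith)
  refine hdom.mono_fun (Measurable.aestronglyMeasurable (by fun_prop)) ?_
  rw [uIoc_of_le hT]
  filter_upwards [ae_restrict_mem measurableSet_Ioc] with t ht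
  rw [norm_mul, Real.rpow_add_one ht.1.ne', norm_mul, mul_comm]
  gcongr
  exact Real.abs_sin_le_abs

theorem intervalIntegral_comp_mul_left_mul_rpow (f : ℝ → ℝ) (p : ℝ) {c R : ℝ} (hc : 0 < c)
    (hR : 0 ≤ R) :
    ∫ t in (0 : ℝ)..R, f (c * t) * t ^ p =
      c ^ (-p - 1) * ∫ u in (0 : ℝ)..c * R, f u * u ^ p := by
  have hpow : c ^ (-p - 1) * c * c ^ p = 1 := by
    rw [← Real.rpow_add_one hc.ne', ← Real.rpow_add hc]
    simp
  have hsubst := intervalIntegral.mul_integral_comp_mul_left (a := 0) (b := R)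
    (f := fun u => f u * u ^ p) c
  rw [mul_zero] at hsubst
  rw [← hsubst, ← mul_assoc, ← intervalIntegral.integral_const_mul]
  refine intervalIntegral.integral_congr fun t ht => ?_
  rw [uIcc_of_le hR] at ht
  simp only [Real.mul_rpow hc.le ht.1]
  linear_combination -(f (c * t) * t ^ p) * hpow

theorem integral_sin_mul_mul_rpow (p : ℝ) {x T : ℝ} (hx : x ≠ 0) (hT : 0 ≤ T) :
    ∫ s in (0 : ℝ)..T / |x|, Real.sin (x * s) * s ^ p =
      Real.sign x * |x| ^ (-p - 1) * ∫ u in (0 : ℝ)..T, Real.sin u * u ^ p := by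
  have hsin : ∀ s, Real.sin (x * s) = Real.sign x * Real.sin (|x| * s) := by
    intro s
    rcases hx.lt_or_gt with h | h
    · simp [Real.sign_of_neg h, abs_of_neg h]
    · simp [Real.sign_of_pos h, abs_of_pos h]
  simp only [hsin, mul_assoc, intervalIntegral.integral_const_mul]
  rw [intervalIntegral_comp_mul_left_mul_rpow Real.sin _ (abs_pos.2 hx) (by positivity),
    mul_div_cancel₀ _ (abs_ne_zero.2 hx)]

theorem integral_sin_mul_exp_neg_mul (y T : ℝ) :
    ∫ t in (0 : ℝ)..T, Real.sin t * Real.exp (-t * y) =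
      (1 - Real.exp (-T * y) * (Real.cos T + y * Real.sin T)) * (1 + y ^ 2)⁻¹ := by
  have hy : 1 + y ^ 2 ≠ 0 := by positivity
  have hderiv : ∀ t ∈ uIcc 0 T, HasDerivAt
      (fun t => -(Real.exp (-t * y) * (Real.cos t + y * Real.sin t)) / (1 + y ^ 2))
      (Real.sin t * Real.exp (-t * y)) t := by
    intro t _
    have hexp : HasDerivAt (fun t => Real.exp (-t * y)) (Real.exp (-t * y) * (-1 * y)) t :=
      ((hasDerivAt_id t).neg.mul_const y).exp
    have htrig : HasDerivAt (fun t => Real.cos t + y * Real.sin t)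
        (-Real.sin t + y * Real.cos t) t :=
      (Real.hasDerivAt_cos t).add ((Real.hasDerivAt_sin t).const_mul y)
    refine ((hexp.mul htrig).neg.div_const (1 + y ^ 2)).congr_deriv ?_
    field_simp
    ring
  rw [intervalIntegral.integral_eq_sub_of_hasDerivAt hderiv
    (Continuous.intervalIntegrable (by fun_prop) _ _)]
  simp only [neg_zero, zero_mul, Real.exp_zero, Real.cos_zero, Real.sin_zero, mul_zero]
  ring

theorem integral_exp_neg_mul_Ioi {t : ℝ} (ht : 0 < t) :
    ∫ y in Ioi (0 : ℝ), Real.exp (-t * y) = t⁻¹ := by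
  rw [integral_exp_mul_Ioi (neg_lt_zero.2 ht), mul_zero, Real.exp_zero, neg_div_neg_eq, one_div]

theorem integral_sin_mul_inv_eq_integral_Ioi {T : ℝ} (hT : 0 ≤ T) :
    ∫ t in (0 : ℝ)..T, Real.sin t * t⁻¹ = ∫ y in Ioi (0 : ℝ),
      (1 - Real.exp (-T * y) * (Real.cos T + y * Real.sin T)) * (1 + y ^ 2)⁻¹ := by
  let F : ℝ → ℝ → ℝ := fun t y => Real.sin t * Real.exp (-t * y)
  have hF : Integrable (Function.uncurry F)
      ((volume.restrict (uIoc 0 T)).prod (volume.restrict (Ioi 0))) := by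
    have hmeas : Measurable (Function.uncurry F) := by fun_prop
    rw [uIoc_of_le hT, integrable_prod_iff hmeas.aestronglyMeasurable]
    constructor
    · filter_upwards [ae_restrict_mem measurableSet_Ioc] with t ht
      exact (integrableOn_exp_mul_Ioi (neg_lt_zero.2 ht.1) 0).const_mul (Real.sin t)
    · have hnorm := (intervalIntegrable_sin_mul_rpow (r := -1) (by norm_num) hT).norm
      rw [intervalIntegrable_iff_integrableOn_Ioc_of_le hT] at hnorm
      refine hnorm.congr ?_
      filter_upwards [ae_restrict_mem measurableSet_Ioc] with t ht
      simp only [Function.uncurry, F, norm_mul, Real.norm_eq_abs, Real.abs_exp]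
      rw [integral_const_mul, integral_exp_neg_mul_Ioi ht.1, Real.rpow_neg_one,
        abs_of_pos (inv_pos.2 ht.1)]
  calc ∫ t in (0 : ℝ)..T, Real.sin t * t⁻¹
      = ∫ t in (0 : ℝ)..T, ∫ y in Ioi (0 : ℝ), F t y := by
        rw [intervalIntegral.integral_of_le hT, intervalIntegral.integral_of_le hT]
        refine setIntegral_congr_fun measurableSet_Ioc fun t ht => ?_
        simp only [F, integral_const_mul, integral_exp_neg_mul_Ioi ht.1]
    _ = ∫ y in Ioi (0 : ℝ), ∫ t in (0 : ℝ)..T, F t y := intervalIntegral_integral_swap hF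
    _ = _ := by simp only [F, integral_sin_mul_exp_neg_mul]

theorem abs_cos_add_mul_sin_div_le (y T : ℝ) :
    |Real.cos T + y * Real.sin T| * (1 + y ^ 2)⁻¹ ≤ 1 := by
  rw [← div_eq_mul_inv, div_le_one (by positivity)]
  refine abs_le_of_sq_le_sq ?_ (by positivity)
  nlinarith [sq_nonneg (y * Real.cos T - Real.sin T), Real.sin_sq_add_cos_sq T, sq_nonneg y,
    sq_nonneg (y ^ 2)]

theorem abs_integral_sin_mul_inv_sub_le {T : ℝ} (hT : 0 < T) :
    |(∫ t in (0 : ℝ)..T, Real.sin t * t⁻¹) - Real.pi / 2| ≤ T⁻¹ := by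
  have hpi : ∫ y in Ioi (0 : ℝ), (1 + y ^ 2)⁻¹ = Real.pi / 2 := by simp
  have hexp := integrableOn_exp_mul_Ioi (neg_lt_zero.2 hT) 0
  have hbound : ∀ y, ‖Real.exp (-T * y) * (Real.cos T + y * Real.sin T) * (1 + y ^ 2)⁻¹‖ ≤
      Real.exp (-T * y) := by
    intro y
    rw [mul_assoc, norm_mul, norm_mul, Real.norm_eq_abs, Real.abs_exp,
      Real.norm_of_nonneg (by positivity : 0 ≤ (1 + y ^ 2)⁻¹)]
    exact mul_le_of_le_one_right (Real.exp_nonneg _) (abs_cos_add_mul_sin_div_le y T)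
  have herr : IntegrableOn
      (fun y => Real.exp (-T * y) * (Real.cos T + y * Real.sin T) * (1 + y ^ 2)⁻¹) (Ioi 0) :=
    hexp.mono' (Measurable.aestronglyMeasurable (by fun_prop)) (Eventually.of_forall hbound)
  rw [integral_sin_mul_inv_eq_integral_Ioi hT.le, ← integral_exp_neg_mul_Ioi hT, ← hpi]
  simp only [sub_mul, one_mul]
  rw [integral_sub integrable_inv_one_add_sq.integrableOn herr, sub_sub_cancel_left, abs_neg]
  exact norm_integral_le_of_norm_le hexp (Eventually.of_forall hbound)

theorem tendsto_integral_sin_mul_inv_atTop :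
    Tendsto (fun T => ∫ t in (0 : ℝ)..T, Real.sin t * t⁻¹) atTop (𝓝 (Real.pi / 2)) := by
  rw [tendsto_iff_norm_sub_tendsto_zero]
  exact squeeze_zero' (Eventually.of_forall fun T => norm_nonneg _)
    ((eventually_gt_atTop 0).mono fun T hT => abs_integral_sin_mul_inv_sub_le hT)
    tendsto_inv_atTop_zero

end SineIntegrals

section ParsevalIdentity

theorem integrableOn_mul_sin_mul_mul_rpow {g : ℝ → ℝ} (hg : Continuous g) {r : ℝ} (hr : -2 < r)
    (a b : ℝ) {R : ℝ} (hR : 0 ≤ R) :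
    IntegrableOn (Function.uncurry fun s t => g s * Real.sin (s * t) * t ^ r)
      (uIoc a b ×ˢ uIoc 0 R) := by
  have hs : IntegrableOn (fun s => g s * s) (uIoc a b) :=
    intervalIntegrable_iff.1 (Continuous.intervalIntegrable (by fun_prop) a b)
  have ht : IntegrableOn (fun t : ℝ => t ^ (r + 1)) (uIoc 0 R) :=
    intervalIntegrable_iff.1 (intervalIntegral.intervalIntegrable_rpow' (by linarith))
  have hdom := hs.mul_prod ht
  rw [Measure.prod_restrict, ← Measure.volume_eq_prod] at hdom
  have hg' := hg.measurable
  refine hdom.mono (Measurable.aestronglyMeasurable (by fun_prop)) ?_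
  filter_upwards [ae_restrict_mem (measurableSet_uIoc.prod measurableSet_uIoc)] with p hp
  obtain ⟨s, t⟩ := p
  have ht0 : 0 < t := by
    have := hp.2
    rw [uIoc_of_le hR] at this
    exact this.1
  calc ‖g s * Real.sin (s * t) * t ^ r‖ = ‖g s‖ * |Real.sin (s * t)| * ‖t ^ r‖ := by
        rw [norm_mul, norm_mul, Real.norm_eq_abs (Real.sin _)]
    _ ≤ ‖g s‖ * |s * t| * ‖t ^ r‖ := by
        gcongr ‖g s‖ * ?_ * ‖t ^ r‖
        exact Real.abs_sin_le_abs
    _ = ‖g s * s * t ^ (r + 1)‖ := by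
        rw [Real.rpow_add_one ht0.ne', abs_mul]
        simp only [norm_mul, Real.norm_eq_abs]
        ring

theorem intervalIntegrable_integral_mul_sin_mul_rpow {g : ℝ → ℝ} (hg : Continuous g) {r : ℝ}
    (hr : -2 < r) (a b : ℝ) {R : ℝ} (hR : 0 ≤ R) :
    IntervalIntegrable (fun t => (∫ s in a..b, g s * Real.sin (s * t)) * t ^ r) volume 0 R := by
  have hprod := integrableOn_mul_sin_mul_mul_rpow hg hr a b hR
  rw [IntegrableOn, Measure.volume_eq_prod, ← Measure.prod_restrict] at hprod
  rw [intervalIntegrable_iff]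
  simp only [intervalIntegral.intervalIntegral_eq_integral_uIoc, smul_eq_mul, mul_assoc]
  simpa only [Function.uncurry, integral_mul_const] using!
    hprod.integral_prod_right.const_mul (if a ≤ b then (1 : ℝ) else -1)

theorem tendsto_integral_integral_mul_sin_mul_rpow {α C T : ℝ} (hα0 : 0 < α) (hα2 : α < 2)
    (hT : 0 ≤ T) {g : ℝ → ℝ} (hg : Continuous g)
    (hC : Tendsto (fun R => ∫ t in (0 : ℝ)..R, Real.sin t * t ^ (-α)) atTop (𝓝 C)) :
    Tendsto (fun R => ∫ t in (0 : ℝ)..R, (∫ s in (0 : ℝ)..T, g s * Real.sin (s * t)) * t ^ (-α))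
      atTop (𝓝 (C * ∫ s in (0 : ℝ)..T, g s * s ^ (α - 1))) := by
  have hsin : ∀ R, 0 ≤ R → IntervalIntegrable (fun t => Real.sin t * t ^ (-α)) volume 0 R :=
    fun R hR => intervalIntegrable_sin_mul_rpow (by linarith) hR
  obtain ⟨M, hM⟩ := exists_norm_intervalIntegral_le_of_tendsto hsin hC
  have hweight : IntervalIntegrable (fun s => g s * s ^ (α - 1)) volume 0 T :=
    (intervalIntegral.intervalIntegrable_rpow' (by linarith)).continuousOn_mul hg.continuousOn
  have hlim := tendsto_integral_mul_comp_mul_atTop hT hweight (continuousOn_Ici_integral hsin) hM hC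
  rw [mul_comm] at hlim
  refine hlim.congr' ?_
  filter_upwards [eventually_ge_atTop 0] with R hR
  calc ∫ s in (0 : ℝ)..T, g s * s ^ (α - 1) * ∫ u in (0 : ℝ)..s * R, Real.sin u * u ^ (-α)
      = ∫ s in (0 : ℝ)..T, ∫ t in (0 : ℝ)..R, g s * Real.sin (s * t) * t ^ (-α) := by
        rw [intervalIntegral.integral_of_le hT, intervalIntegral.integral_of_le hT]
        refine setIntegral_congr_fun measurableSet_Ioc fun s hs => ?_
        simp only [mul_assoc, intervalIntegral.integral_const_mul]
        rw [intervalIntegral_comp_mul_left_mul_rpow Real.sin (-α) hs.1 hR, neg_neg]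
    _ = ∫ t in (0 : ℝ)..R, ∫ s in (0 : ℝ)..T, g s * Real.sin (s * t) * t ^ (-α) :=
        intervalIntegral_intervalIntegral_swap
          (integrableOn_mul_sin_mul_mul_rpow hg (by linarith) 0 T hR)
    _ = _ := by simp only [intervalIntegral.integral_mul_const]

end ParsevalIdentity

section SineKernel

theorem one_sub_sq_mul_integral_sin_mul_sin (T t : ℝ) :
    (1 - t ^ 2) * ∫ s in (0 : ℝ)..T, Real.sin s * Real.sin (s * t) =
      t * Real.sin T * Real.cos (T * t) - Real.cos T * Real.sin (T * t) := by
  have hderiv : ∀ s ∈ uIcc 0 T, HasDerivAt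
      (fun s => t * Real.sin s * Real.cos (s * t) - Real.cos s * Real.sin (s * t))
      ((1 - t ^ 2) * (Real.sin s * Real.sin (s * t))) s := by
    intro s _
    have hst : HasDerivAt (fun s => s * t) (1 * t) s := (hasDerivAt_id s).mul_const t
    refine ((((Real.hasDerivAt_sin s).const_mul t).mul hst.cos).sub
      ((Real.hasDerivAt_cos s).mul hst.sin)).congr_deriv ?_
    ring
  rw [← intervalIntegral.integral_const_mul, intervalIntegral.integral_eq_sub_of_hasDerivAt hderiv
    (Continuous.intervalIntegrable (by fun_prop) _ _)]
  simp

theorem abs_rpow_sub_one_le {p t : ℝ} (hp : |p| ≤ 2) (ht0 : 0 < t) (ht1 : t ≤ 1) :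
    |t ^ p - 1| ≤ (t ^ p + 1) * (1 - t ^ 2) := by
  obtain ⟨hp_neg, hp_pos⟩ := abs_le.1 hp
  have hsq_le : t ^ 2 ≤ t ^ p := by
    simpa only [Real.rpow_two] using Real.rpow_le_rpow_of_exponent_ge ht0 ht1 hp_pos
  have hsq_le_one : t ^ 2 ≤ 1 := pow_le_one₀ ht0.le ht1
  have hmul_le_one : t ^ p * t ^ 2 ≤ 1 := by
    rw [← Real.rpow_two, ← Real.rpow_add ht0]
    exact Real.rpow_le_one ht0.le ht1 (by linarith)
  have hmul_le : t ^ p * t ^ 2 ≤ t ^ p := mul_le_of_le_one_right (by positivity) hsq_le_one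
  rw [abs_le]
  constructor <;> linarith

theorem abs_rpow_sub_one_div_le_of_lt_one {p t : ℝ} (hp : |p| ≤ 2) (ht0 : 0 < t) (ht1 : t < 1) :
    |(t ^ p - 1) / (1 - t ^ 2)| ≤ t ^ p + 1 := by
  have hpos : 0 < 1 - t ^ 2 := sub_pos.2 (pow_lt_one₀ ht0.le ht1 two_ne_zero)
  rw [abs_div, abs_of_pos hpos, div_le_iff₀ hpos]
  exact abs_rpow_sub_one_le hp ht0 ht1.le

theorem abs_rpow_sub_one_div_le_of_one_lt {p t : ℝ} (hp : |p| ≤ 2) (ht : 1 < t) :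
    |(t ^ p - 1) / (1 - t ^ 2)| ≤ t ^ (p - 2) + t ^ (-2 : ℝ) := by
  have ht0 : 0 < t := one_pos.trans ht
  have hsq : 1 - t ^ 2 ≠ 0 := (sub_neg.2 (one_lt_pow₀ ht two_ne_zero)).ne
  have hsq_inv : 1 - t⁻¹ ^ 2 = -(1 - t ^ 2) / t ^ 2 := by
    field_simp
    ring
  have hinversion : (t ^ p - 1) / (1 - t ^ 2) =
      t ^ (p - 2) * ((t⁻¹ ^ p - 1) / (1 - t⁻¹ ^ 2)) := by
    rw [hsq_inv, Real.inv_rpow ht0.le, Real.rpow_sub ht0, Real.rpow_two]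
    field_simp
    ring
  calc |(t ^ p - 1) / (1 - t ^ 2)|
      = t ^ (p - 2) * |(t⁻¹ ^ p - 1) / (1 - t⁻¹ ^ 2)| := by
        rw [hinversion, abs_mul, abs_of_pos (Real.rpow_pos_of_pos ht0 _)]
    _ ≤ t ^ (p - 2) * (t⁻¹ ^ p + 1) := by
        gcongr
        exact abs_rpow_sub_one_div_le_of_lt_one hp (inv_pos.2 ht0) (inv_lt_one_of_one_lt₀ ht)
    _ = t ^ (p - 2) + t ^ (-2 : ℝ) := by
        rw [Real.inv_rpow ht0.le, ← Real.rpow_neg ht0.le, mul_add, ← Real.rpow_add ht0,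
          show p - 2 + -p = -2 by ring]
        ring

theorem integrableOn_rpow_sub_one_div {p : ℝ} (hp : |p| < 1) :
    IntegrableOn (fun t : ℝ => (t ^ p - 1) / (1 - t ^ 2)) (Ioi 0) := by
  obtain ⟨hp_neg, hp_pos⟩ := abs_lt.1 hp
  have hmeas : Measurable fun t : ℝ => (t ^ p - 1) / (1 - t ^ 2) := by fun_prop
  have hnear : IntegrableOn (fun t : ℝ => (t ^ p - 1) / (1 - t ^ 2)) (Ioo 0 1) := by
    have hdom : IntegrableOn (fun t : ℝ => t ^ p + 1) (Ioo 0 1) :=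
      ((intervalIntegrable_iff_integrableOn_Ioo_of_le zero_le_one).1
        (intervalIntegral.intervalIntegrable_rpow' hp_neg)).add (integrableOn_const (by simp))
    refine hdom.mono' hmeas.aestronglyMeasurable ?_
    filter_upwards [ae_restrict_mem measurableSet_Ioo] with t ht
    exact abs_rpow_sub_one_div_le_of_lt_one (by linarith) ht.1 ht.2
  have hfar : IntegrableOn (fun t : ℝ => (t ^ p - 1) / (1 - t ^ 2)) (Ioi 1) := by
    have hdom : IntegrableOn (fun t : ℝ => t ^ (p - 2) + t ^ (-2 : ℝ)) (Ioi 1) :=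
      (integrableOn_Ioi_rpow_of_lt (by linarith) one_pos).add
        (integrableOn_Ioi_rpow_of_lt (by norm_num) one_pos)
    refine hdom.mono' hmeas.aestronglyMeasurable ?_
    filter_upwards [ae_restrict_mem measurableSet_Ioi] with t ht
    exact abs_rpow_sub_one_div_le_of_one_lt (by linarith) ht
  rw [← Ioo_union_Ici_eq_Ioi zero_lt_one]
  exact hnear.union ((integrableOn_Ici_iff_integrableOn_Ioi (by finiteness)).2 hfar)

theorem integral_sin_mul_sin_mul_rpow_sub {T : ℝ} (hT : Real.cos T = 0) (α : ℝ) {t : ℝ}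
    (ht : 0 < t) :
    (∫ s in (0 : ℝ)..T, Real.sin s * Real.sin (s * t)) * t ^ (-α) -
        (∫ s in (0 : ℝ)..T, Real.sin s * Real.sin (s * t)) * t ^ (-1 : ℝ) =
      Real.sin T * (Real.cos (T * t) * ((t ^ (1 - α) - 1) / (1 - t ^ 2))) := by
  rcases eq_or_ne t 1 with rfl | ht1
  · simp
  have hne : 1 - t ^ 2 ≠ 0 := by
    rwa [sub_ne_zero, ne_comm, Ne, pow_eq_one_iff_of_nonneg ht.le two_ne_zero]
  have hker := one_sub_sq_mul_integral_sin_mul_sin T t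
  rw [hT, zero_mul, sub_zero, mul_comm, ← eq_div_iff hne] at hker
  rw [hker, show 1 - α = -α + 1 by ring, Real.rpow_add_one ht.ne', Real.rpow_neg_one]
  field_simp

theorem mul_integral_sin_mul_rpow_of_cos_eq_zero {α C T : ℝ} (hα0 : 0 < α) (hα2 : α < 2)
    (hC : Tendsto (fun R => ∫ t in (0 : ℝ)..R, Real.sin t * t ^ (-α)) atTop (𝓝 C))
    (hT : 0 ≤ T) (hcos : Real.cos T = 0) :
    C * ∫ s in (0 : ℝ)..T, Real.sin s * s ^ (α - 1) = Real.pi / 2 +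
      Real.sin T * ∫ t in Ioi (0 : ℝ), Real.cos (T * t) * ((t ^ (1 - α) - 1) / (1 - t ^ 2)) := by
  have hdirichlet : Tendsto (fun R => ∫ t in (0 : ℝ)..R, Real.sin t * t ^ (-1 : ℝ)) atTop
      (𝓝 (Real.pi / 2)) := by
    simpa only [Real.rpow_neg_one] using tendsto_integral_sin_mul_inv_atTop
  have hone : ∫ s in (0 : ℝ)..T, Real.sin s * s ^ ((1 : ℝ) - 1) = 1 := by simp [hcos]
  have hsub := (tendsto_integral_integral_mul_sin_mul_rpow hα0 hα2 hT Real.continuous_sin hC).sub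
    (tendsto_integral_integral_mul_sin_mul_rpow one_pos one_lt_two hT Real.continuous_sin
      hdirichlet)
  rw [hone, mul_one] at hsub
  have hweight : IntegrableOn
      (fun t => Real.cos (T * t) * ((t ^ (1 - α) - 1) / (1 - t ^ 2))) (Ioi 0) :=
    (integrableOn_rpow_sub_one_div (abs_lt.2 ⟨by linarith, by linarith⟩)).bdd_mul (c := 1)
      (Continuous.aestronglyMeasurable (by fun_prop))
      (Eventually.of_forall fun t => Real.abs_cos_le_one _)
  have hlim := (intervalIntegral_tendsto_integral_Ioi 0 hweight tendsto_id).const_mul (Real.sin T)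
  rw [← sub_eq_iff_eq_add']
  refine tendsto_nhds_unique hsub (hlim.congr' ?_)
  filter_upwards [eventually_ge_atTop 0] with R hR
  rw [← intervalIntegral.integral_sub
      (intervalIntegrable_integral_mul_sin_mul_rpow Real.continuous_sin (by linarith) 0 T hR)
      (intervalIntegrable_integral_mul_sin_mul_rpow Real.continuous_sin (by norm_num) 0 T hR),
    ← intervalIntegral.integral_const_mul, id, intervalIntegral.integral_of_le hR,
    intervalIntegral.integral_of_le hR]
  exact setIntegral_congr_fun measurableSet_Ioc fun t ht =>
    (integral_sin_mul_sin_mul_rpow_sub hcos α ht.1).symm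

theorem tendsto_mul_integral_sin_mul_rpow {α C : ℝ} (hα0 : 0 < α) (hα2 : α < 2)
    (hC : Tendsto (fun R => ∫ t in (0 : ℝ)..R, Real.sin t * t ^ (-α)) atTop (𝓝 C)) :
    Tendsto (fun T => C * ∫ s in (0 : ℝ)..T, Real.sin s * s ^ (α - 1))
      (atTop ⊓ 𝓟 {T | Real.cos T = 0}) (𝓝 (Real.pi / 2)) := by
  have hRL := tendsto_setIntegral_cos_mul_atTop measurableSet_Ioi
    (integrableOn_rpow_sub_one_div (p := 1 - α) (abs_lt.2 ⟨by linarith, by linarith⟩))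
  have hsin : Tendsto (fun T => Real.sin T * ∫ t in Ioi (0 : ℝ),
      Real.cos (T * t) * ((t ^ (1 - α) - 1) / (1 - t ^ 2))) atTop (𝓝 0) :=
    bdd_le_mul_tendsto_zero' 1 (Eventually.of_forall Real.abs_sin_le_one) hRL
  have hlim := (hsin.const_add (Real.pi / 2)).mono_left
    (inf_le_left (b := 𝓟 {T | Real.cos T = 0}))
  rw [add_zero] at hlim
  refine hlim.congr' ?_
  filter_upwards [mem_inf_of_left (eventually_ge_atTop 0),
    mem_inf_of_right (mem_principal_self _)] with T hT hcos
  exact (mul_integral_sin_mul_rpow_of_cos_eq_zero hα0 hα2 hC hT hcos).symm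

end SineKernel

section OddFourierIntegral

theorem integral_exp_mul_of_odd {h : ℝ → ℂ} (hodd : Function.Odd h)
    (hint : ∀ T, 0 < T → IntervalIntegrable h volume 0 T) (x T : ℝ) :
    ∫ s in (-T)..T, Complex.exp (Complex.I * x * s) * h s =
      2 * Complex.I * ∫ s in (0 : ℝ)..T, Complex.sin (x * s) * h s := by
  have hexp : ∀ a b, IntervalIntegrable (fun s : ℝ => Complex.exp (Complex.I * x * s) * h s)
      volume a b := fun a b =>
    (intervalIntegrable_of_odd (fun s => (hodd s).symm) hint).continuousOn_mul
      (Continuous.continuousOn (by fun_prop))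
  have hreflect : ∫ s in (-T)..0, Complex.exp (Complex.I * x * s) * h s =
      ∫ s in (0 : ℝ)..T, Complex.exp (Complex.I * x * ↑(-s)) * h (-s) := by
    rw [intervalIntegral.integral_comp_neg (fun s : ℝ => Complex.exp (Complex.I * x * s) * h s),
      neg_zero]
  have hexp_neg : IntervalIntegrable
      (fun s : ℝ => Complex.exp (Complex.I * x * ↑(-s)) * h (-s)) volume 0 T := by
    simpa using! (IntervalIntegrable.iff_comp_neg (a := 0) (b := -T)).1 (hexp 0 (-T))
  rw [← intervalIntegral.integral_add_adjacent_intervals (hexp (-T) 0) (hexp 0 T), hreflect,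
    ← intervalIntegral.integral_add hexp_neg (hexp 0 T), ← intervalIntegral.integral_const_mul]
  refine intervalIntegral.integral_congr fun s _ => ?_
  simp only [hodd s, Complex.sin]
  push_cast
  rw [show Complex.I * x * -(s : ℂ) = -(x * s) * Complex.I by ring,
    show Complex.I * x * (s : ℂ) = x * s * Complex.I by ring]
  ring_nf
  simp only [Complex.I_sq]
  ring

theorem integral_exp_mul_sign_mul_abs_rpow {p : ℝ} (hp : -1 < p) (c : ℂ) (x : ℝ) {T : ℝ}
    (hT : 0 ≤ T) :
    ∫ s in (-T)..T, Complex.exp (Complex.I * x * s) *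
        (c * ((Real.sign s : ℝ) : ℂ) * ((|s| ^ p : ℝ) : ℂ)) =
      2 * Complex.I * c * ((∫ s in (0 : ℝ)..T, Real.sin (x * s) * s ^ p : ℝ) : ℂ) := by
  have hodd : Function.Odd fun s : ℝ => c * ((Real.sign s : ℝ) : ℂ) * ((|s| ^ p : ℝ) : ℂ) := by
    intro s
    simp [Real.sign_neg]
  have hpos : ∀ s : ℝ, 0 < s → c * ((Real.sign s : ℝ) : ℂ) * ((|s| ^ p : ℝ) : ℂ) =
      c * ((s ^ p : ℝ) : ℂ) := by
    intro s hs
    rw [Real.sign_of_pos hs, abs_of_pos hs, Complex.ofReal_one, mul_one]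
  have hint : ∀ R, 0 < R → IntervalIntegrable
      (fun s : ℝ => c * ((Real.sign s : ℝ) : ℂ) * ((|s| ^ p : ℝ) : ℂ)) volume 0 R := by
    intro R hR
    have hrpow : IntervalIntegrable (fun s : ℝ => s ^ p) volume 0 R :=
      intervalIntegral.intervalIntegrable_rpow' hp
    rw [intervalIntegrable_iff_integrableOn_Ioc_of_le hR.le] at hrpow ⊢
    exact IntegrableOn.congr_fun (hrpow.ofReal.const_mul c) (fun s hs => (hpos s hs.1).symm)
      measurableSet_Ioc
  rw [integral_exp_mul_of_odd hodd hint, mul_assoc _ c, ← intervalIntegral.integral_ofReal,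
    ← intervalIntegral.integral_const_mul c, intervalIntegral.integral_of_le hT,
    intervalIntegral.integral_of_le hT]
  congr 1
  refine setIntegral_congr_fun measurableSet_Ioc fun s hs => ?_
  simp only [hpos s hs.1]
  push_cast
  ring

end OddFourierIntegral

theorem tendsto_half_odd_mul_pi :
    Tendsto (fun n : ℕ => (2 * (n : ℝ) + 1) * Real.pi / 2) atTop
      (atTop ⊓ 𝓟 {T | Real.cos T = 0}) := by
  refine tendsto_inf.2 ⟨?_, tendsto_principal.2 (Eventually.of_forall fun n => ?_)⟩
  · exact ((tendsto_atTop_add_const_right _ _ (tendsto_natCast_atTop_atTop.const_mul_atTop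
      two_pos)).atTop_mul_const Real.pi_pos).atTop_div_const two_pos
  · exact Real.cos_eq_zero_iff.2 ⟨n, by push_cast; rfl⟩

/-- Principal value inversion for `sgn(x)|x|^{-α}`, `0 < α < 2`: with
`f̂(s) = -2i sgn(s)|s|^{α-1} C_α` and `T_n = (2n+1)π/(2|x|)`, for each `x ≠ 0`,
`sgn(x)|x|^{-α} = (1/(2π)) lim_{n→∞} ∫_{-T_n}^{T_n} e^{ixs} f̂(s) ds`. -/
theorem pv_fourier_inversion_sign_rpow (α : ℝ) (hα0 : 0 < α) (hα2 : α < 2)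
    (C : ℝ)
    (hC : Filter.Tendsto (fun R : ℝ => ∫ t in (0:ℝ)..R, Real.sin t * t ^ (-α))
      Filter.atTop (nhds C))
    (x : ℝ) (hx : x ≠ 0) :
    Filter.Tendsto
      (fun n : ℕ => (1 / (2 * (Real.pi : ℂ))) *
        ∫ s in (-((2 * (n : ℝ) + 1) * Real.pi / (2 * |x|)))..((2 * (n : ℝ) + 1) *
            Real.pi / (2 * |x|)),
          Complex.exp (Complex.I * x * s) *
            ((-2 : ℂ) * Complex.I * ((Real.sign s : ℝ) : ℂ) *
              ((|s| ^ (α - 1) : ℝ) : ℂ) * (C : ℂ)))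
      Filter.atTop
      (nhds ((Real.sign x * |x| ^ (-α) : ℝ) : ℂ)) := by
  have hconst : 2 / Real.pi * (Real.sign x * |x| ^ (-α)) * (Real.pi / 2) =
      Real.sign x * |x| ^ (-α) := by field_simp
  have hlim := ((tendsto_mul_integral_sin_mul_rpow hα0 hα2 hC).comp
    tendsto_half_odd_mul_pi).const_mul (2 / Real.pi * (Real.sign x * |x| ^ (-α)))
  rw [hconst] at hlim
  refine ((Complex.continuous_ofReal.tendsto _).comp hlim).congr fun n => ?_
  have hT : 0 ≤ (2 * (n : ℝ) + 1) * Real.pi / 2 := by positivity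
  have hfourier := integral_exp_mul_sign_mul_abs_rpow (p := α - 1) (by linarith)
    (-2 * Complex.I) x (div_nonneg hT (abs_nonneg x))
  have hfactor : 2 * Complex.I * (-2 * Complex.I) = 4 := by linear_combination -4 * Complex.I_sq
  rw [integral_sin_mul_mul_rpow _ hx hT, div_div, hfactor, neg_sub, sub_sub_cancel_left] at hfourier
  simp only [← mul_assoc _ _ (C : ℂ), intervalIntegral.integral_mul_const, hfourier,
    Function.comp_apply]
  push_cast
  ring
end
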